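/- arXiv:2201.09286 — 5 statements merged into one kernel-verified Lean document; each statement's English description precedes it below -/
import Mathlib

section
/- Let V be a finite set, A : V → ℝ, and f a partial function from V to V (each vertex has at most one successor) such that A(v) < A(f(v)) whenever f(v) is defined. Consider the undirected graph on V whose edges are the pairs {v, f(v)} for v with f(v) defined. Then every connected component of this graph contains exactly one vertex v at which f is undefined. -/
/-! Two vertices lie in the same component exactly when they are related by the equivalence closure
of the successor relation. As successors are unique, the successor relation is confluent, so by
the Church–Rosser theorem two connected vertices have a common iterated successor (possibly after
zero steps); vertices without successor can only share one if they are equal. Existence holds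
because iterating the successor terminates. -/

open Relation

section

variable {α : Type*} {r : α → α → Prop} {a b : α}

theorem eq_of_reflTransGen_of_forall_not (hab : ReflTransGen r a b) (ha : ∀ c, ¬ r a c) :
    a = b :=
  hab.cases_head.resolve_right fun ⟨c, hac, _⟩ ↦ ha c hac

theorem exists_reflTransGen_forall_not (hwf : WellFounded (flip r)) (a : α) :
    ∃ b, ReflTransGen r a b ∧ ∀ c, ¬ r b c := by
  obtain ⟨b, hab, hmin⟩ := hwf.has_min {b | ReflTransGen r a b} ⟨a, .refl⟩
  exact ⟨b, hab, fun c hbc ↦ hmin c (hab.tail hbc) hbc⟩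

theorem eqvGen_le_join_reflTransGen
    (hdiamond : ∀ a b c, r a b → r a c → ∃ d, ReflGen r b d ∧ ReflTransGen r c d) :
    EqvGen r ≤ Join (ReflTransGen r) := fun _ _ hab ↦
  (equivalence_join_reflTransGen hdiamond).eqvGen_iff.1 <|
    hab.mono fun _ b hab ↦ ⟨b, .single hab, .refl⟩

theorem eq_of_eqvGen_of_forall_not (hjoin : EqvGen r ≤ Join (ReflTransGen r))
    (hab : EqvGen r a b) (ha : ∀ c, ¬ r a c) (hb : ∀ c, ¬ r b c) : a = b := by
  obtain ⟨d, had, hbd⟩ := hjoin a b hab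
  exact (eq_of_reflTransGen_of_forall_not had ha).trans
    (eq_of_reflTransGen_of_forall_not hbd hb).symm

theorem existsUnique_eqvGen_forall_not (hwf : WellFounded (flip r))
    (hjoin : EqvGen r ≤ Join (ReflTransGen r)) (a : α) :
    ∃! b, EqvGen r b a ∧ ∀ c, ¬ r b c := by
  obtain ⟨b, hab, hb⟩ := exists_reflTransGen_forall_not hwf a
  have hba : EqvGen r b a := (EqvGen.reflTransGen_le_eqvGen r a b hab).symm
  exact ⟨b, ⟨hba, hb⟩, fun d ⟨hda, hd⟩ ↦
    eq_of_eqvGen_of_forall_not hjoin (hda.trans _ _ _ hba.symm) hd hb⟩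

theorem wellFounded_flip_of_forall_lt {β : Type*} [Finite α] [Preorder β] (A : α → β)
    (hA : ∀ a b, r a b → A a < A b) : WellFounded (flip r) :=
  Subrelation.wf (fun {b a} hab ↦ hA a b hab)
    (Finite.wellFounded_of_trans_of_irrefl (A ⁻¹'o (· > ·)))

end

theorem reachable_fromRel_eq_eqvGen {V : Type*} (r : V → V → Prop) :
    (SimpleGraph.fromRel r).Reachable = EqvGen r := by
  have hAdj : ReflGen (SimpleGraph.fromRel r).Adj = ReflGen (SymmGen r) := by
    ext v w
    simp only [reflGen_iff, SimpleGraph.fromRel_adj, SymmGen]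
    tauto
  rw [SimpleGraph.reachable_eq_reflTransGen, ← transGen_reflGen, hAdj, transGen_reflGen,
    EqvGen.reflTransGen_symmGen]

theorem unique_local_max_per_component_general {V : Type*} (f : V → Option V)
    (hf : WellFounded fun w v ↦ f v = some w) (G : SimpleGraph V)
    (hG : ∀ v w : V, G.Adj v w ↔ (v ≠ w ∧ (f v = some w ∨ f w = some v))) :
    ∀ comp : G.ConnectedComponent,
      ∃! v : V, G.connectedComponentMk v = comp ∧ f v = none := by
  obtain rfl : G = SimpleGraph.fromRel fun v w ↦ f v = some w := by
    ext v w
    exact hG v w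
  have hdiamond (u v w : V) (hv : f u = some v) (hw : f u = some w) :
      ∃ x, ReflGen (fun v w ↦ f v = some w) v x ∧ ReflTransGen (fun v w ↦ f v = some w) w x :=
    ⟨v, .refl, Option.some.inj (hw.symm.trans hv) ▸ .refl⟩
  refine SimpleGraph.ConnectedComponent.ind fun u ↦ ?_
  simpa only [SimpleGraph.ConnectedComponent.eq, reachable_fromRel_eq_eqvGen,
    Option.eq_none_iff_forall_ne_some] using
      existsUnique_eqvGen_forall_not hf (eqvGen_le_join_reflTransGen hdiamond) u

/-- Lemma 3.1 (abstract form): if every vertex `v` has at most one successor `f v`, of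
strictly larger value `A (f v) > A v`, then every connected component of the undirected
graph with edges `{v, f v}` contains exactly one vertex with no successor (a unique local
maximum per superpixel). -/
theorem unique_local_max_per_component
    {V : Type*} [Fintype V] (A : V → ℝ) (f : V → Option V)
    (hf : ∀ v w : V, f v = some w → A v < A w)
    (G : SimpleGraph V)
    (hG : ∀ v w : V, G.Adj v w ↔ (v ≠ w ∧ (f v = some w ∨ f w = some v))) :
    ∀ comp : G.ConnectedComponent,
      ∃! v : V, G.connectedComponentMk v = comp ∧ f v = none :=
  unique_local_max_per_component_general f (wellFounded_flip_of_forall_lt A hf) G hG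
end

section
/- Let k_s ≥ 5 be a real number and set Δ = (1 + 2·Σ_{u∈ℤ, 1 ≤ u ≤ 3k_s} exp(−u²/(2k_s²)))². Then (2k_s + 1)² ≤ Δ ≤ (5k_s + 2)²/4. -/
open Real

/-!
Since `u ↦ exp (-u²/(2k²))` is antitone and at most `1` on `[0, ∞)`, the sum `S` over
`1 ≤ u ≤ 3k` satisfies `k * I - 1 ≤ S ≤ k * I` with `I = ∫ t in 0..3, exp (-t²/2)`. The claim is
equivalent to `k ≤ S ≤ 5/4 * k`, so for `k ≥ 5` it is enough that `6/5 ≤ I ≤ 5/4`.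

The upper bound is tight: `I ≈ 1.24993`, while the integral over the whole half-line is
`√(π/2) ≈ 1.25331`. The Mills ratio inequalities
`x/(x²+1) * exp (-x²/2) ≤ ∫ t in Ioi x, exp (-t²/2) ≤ exp (-x²/2)/x`, taken at `x = 3`, determine
the missing tail precisely enough.
-/

open Set MeasureTheory Filter Topology

section SumIntegral

lemma sum_Icc_one_int {M : Type*} [AddCommMonoid M] (f : ℤ → M) (n : ℤ) :
    ∑ u ∈ Finset.Icc 1 n, f u = ∑ i ∈ Finset.range n.toNat, f (i + 1) := by
  simp [Int.Icc_eq_finset_map, add_comm]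

variable {f : ℝ → ℝ} {R : ℝ}

lemma sum_Icc_one_floor_le_integral (hf : AntitoneOn f (Icc 0 R)) (hR : 0 ≤ R) (hfR : 0 ≤ f R) :
    ∑ u ∈ Finset.Icc (1 : ℤ) ⌊R⌋, f u ≤ ∫ x in (0 : ℝ)..R, f x := by
  have hn : (⌊R⌋₊ : ℝ) ≤ R := Nat.floor_le hR
  have hsum : ∑ u ∈ Finset.Icc (1 : ℤ) ⌊R⌋, f u ≤ ∫ x in (0 : ℝ)..⌊R⌋₊, f x := by
    have h := AntitoneOn.sum_le_integral (x₀ := 0) (a := ⌊R⌋₊)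
      (hf.mono (by gcongr; simpa using hn))
    simpa [sum_Icc_one_int, Int.floor_toNat] using h
  have hint : IntervalIntegrable f volume 0 R :=
    AntitoneOn.intervalIntegrable (by rwa [uIcc_of_le hR])
  refine hsum.trans (intervalIntegral.integral_mono_interval le_rfl (by positivity) hn ?_ hint)
  filter_upwards [ae_restrict_mem measurableSet_Ioc] with x hx
  exact hfR.trans (hf (Ioc_subset_Icc_self hx) ⟨hR, le_rfl⟩ hx.2)

lemma integral_le_add_sum_Icc_one_floor (hf : AntitoneOn f (Icc 0 R)) (hR : 0 ≤ R)
    (hfR : 0 ≤ f R) :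
    ∫ x in (0 : ℝ)..R, f x ≤ f 0 + ∑ u ∈ Finset.Icc (1 : ℤ) ⌊R⌋, f u := by
  set n := ⌊R⌋₊ with hn_def
  have hn : (n : ℝ) ≤ R := Nat.floor_le hR
  have hn0 : (0 : ℝ) ≤ n := n.cast_nonneg
  have hf_left : AntitoneOn f (Icc 0 n) := hf.mono (by gcongr)
  have hf_right : AntitoneOn f (Icc n R) := hf.mono (by gcongr)
  have hint_left : IntervalIntegrable f volume 0 n :=
    AntitoneOn.intervalIntegrable (by rwa [uIcc_of_le hn0])
  have hint_right : IntervalIntegrable f volume n R :=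
    AntitoneOn.intervalIntegrable (by rwa [uIcc_of_le hn])
  have hleft : ∫ x in (0 : ℝ)..n, f x ≤ ∑ i ∈ Finset.range n, f i := by
    simpa using AntitoneOn.integral_le_sum (x₀ := 0) (a := n) (by simpa using hf_left)
  have hright : ∫ x in (n : ℝ)..R, f x ≤ f n := calc
    ∫ x in (n : ℝ)..R, f x ≤ ∫ _ in (n : ℝ)..R, f n :=
      intervalIntegral.integral_mono_on hn hint_right intervalIntegrable_const
        fun x hx => hf_right ⟨le_rfl, hn⟩ hx hx.1
    _ = (R - n) * f n := by simp
    _ ≤ f n := mul_le_of_le_one_left (hfR.trans (hf ⟨hn0, hn⟩ ⟨hR, le_rfl⟩ hn))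
      (by linarith [Nat.lt_floor_add_one R])
  calc ∫ x in (0 : ℝ)..R, f x
      = (∫ x in (0 : ℝ)..n, f x) + ∫ x in (n : ℝ)..R, f x :=
        (intervalIntegral.integral_add_adjacent_intervals hint_left hint_right).symm
    _ ≤ ∑ i ∈ Finset.range (n + 1), f i := by
        rw [Finset.sum_range_succ]
        exact add_le_add hleft hright
    _ = f 0 + ∑ u ∈ Finset.Icc (1 : ℤ) ⌊R⌋, f u := by
        simp [Finset.sum_range_succ', sum_Icc_one_int, Int.floor_toNat, hn_def, add_comm]

end SumIntegral

section GaussianSum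

variable {k r : ℝ}

lemma antitoneOn_exp_neg_sq_div (k : ℝ) :
    AntitoneOn (fun x : ℝ => exp (-x ^ 2 / (2 * k ^ 2))) (Ici 0) := by
  intro x hx y _ hxy
  rw [mem_Ici] at hx
  beta_reduce
  gcongr

lemma integral_exp_neg_sq_div (hk : k ≠ 0) (r : ℝ) :
    ∫ x in (0 : ℝ)..r * k, exp (-x ^ 2 / (2 * k ^ 2)) =
      k * ∫ t in (0 : ℝ)..r, exp (-t ^ 2 / 2) := by
  have h := intervalIntegral.integral_comp_div (a := 0) (b := r * k)
    (fun t : ℝ => exp (-t ^ 2 / 2)) hk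
  rw [zero_div, mul_div_cancel_right₀ r hk, smul_eq_mul] at h
  rw [← h]
  congr! 3 with x
  field_simp

lemma sum_exp_neg_sq_div_le_mul_integral (hk : 0 < k) (hr : 0 ≤ r) :
    ∑ u ∈ Finset.Icc (1 : ℤ) ⌊r * k⌋, exp (-(u : ℝ) ^ 2 / (2 * k ^ 2)) ≤
      k * ∫ t in (0 : ℝ)..r, exp (-t ^ 2 / 2) := by
  rw [← integral_exp_neg_sq_div hk.ne']
  exact sum_Icc_one_floor_le_integral ((antitoneOn_exp_neg_sq_div k).mono Icc_subset_Ici_self)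
    (by positivity) (exp_nonneg _)

lemma mul_integral_le_one_add_sum_exp_neg_sq_div (hk : 0 < k) (hr : 0 ≤ r) :
    k * ∫ t in (0 : ℝ)..r, exp (-t ^ 2 / 2) ≤
      1 + ∑ u ∈ Finset.Icc (1 : ℤ) ⌊r * k⌋, exp (-(u : ℝ) ^ 2 / (2 * k ^ 2)) := by
  rw [← integral_exp_neg_sq_div hk.ne']
  simpa using integral_le_add_sum_Icc_one_floor
    ((antitoneOn_exp_neg_sq_div k).mono Icc_subset_Ici_self) (by positivity : 0 ≤ r * k)
    (exp_nonneg _)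

end GaussianSum

section GaussianIntegral

lemma hasDerivAt_exp_neg_sq_div_two (x : ℝ) :
    HasDerivAt (fun t : ℝ => exp (-t ^ 2 / 2)) (-x * exp (-x ^ 2 / 2)) x := by
  refine (((hasDerivAt_pow 2 x).neg.div_const 2).exp).congr_deriv ?_
  simp only [Pi.neg_apply]
  ring

lemma tendsto_exp_neg_sq_div_two_atTop :
    Tendsto (fun t : ℝ => exp (-t ^ 2 / 2)) atTop (𝓝 0) :=
  tendsto_exp_atBot.comp
    ((tendsto_neg_atTop_atBot.comp (tendsto_pow_atTop two_ne_zero)).atBot_div_const two_pos)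

lemma integrable_exp_neg_sq_div_two : Integrable fun t : ℝ => exp (-t ^ 2 / 2) := by
  convert integrable_exp_neg_mul_sq (b := 1 / 2) (by norm_num) using 3
  ring

lemma integral_Ioi_zero_exp_neg_sq_div_two :
    ∫ t in Ioi (0 : ℝ), exp (-t ^ 2 / 2) = √(π / 2) := calc
  ∫ t in Ioi (0 : ℝ), exp (-t ^ 2 / 2) = ∫ t in Ioi (0 : ℝ), exp (-(1 / 2) * t ^ 2) := by
    congr! 3
    ring
  _ = √(π / (1 / 2)) / 2 := integral_gaussian_Ioi (1 / 2)
  _ = √(2 ^ 2 * (π / 2)) / 2 := by ring_nf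
  _ = √(π / 2) := by simp

lemma integral_exp_neg_sq_div_two_eq_sub (x : ℝ) :
    ∫ t in (0 : ℝ)..x, exp (-t ^ 2 / 2) = √(π / 2) - ∫ t in Ioi x, exp (-t ^ 2 / 2) := by
  rw [← integral_Ioi_zero_exp_neg_sq_div_two, intervalIntegral.integral_Ioi_sub_Ioi'
    integrable_exp_neg_sq_div_two.integrableOn integrable_exp_neg_sq_div_two.integrableOn]

lemma integral_Ioi_exp_neg_sq_div_two_le {x : ℝ} (hx : 0 < x) :
    ∫ t in Ioi x, exp (-t ^ 2 / 2) ≤ exp (-x ^ 2 / 2) / x := by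
  have hderiv (t : ℝ) : HasDerivAt (fun t => -exp (-t ^ 2 / 2) / x)
      (t / x * exp (-t ^ 2 / 2)) t :=
    ((hasDerivAt_exp_neg_sq_div_two t).neg.div_const x).congr_deriv (by ring)
  have hnonneg : ∀ t ∈ Ioi x, 0 ≤ t / x * exp (-t ^ 2 / 2) := fun t (ht : x < t) => by
    have := hx.trans ht
    positivity
  have hlim : Tendsto (fun t : ℝ => -exp (-t ^ 2 / 2) / x) atTop (𝓝 0) := by
    simpa using tendsto_exp_neg_sq_div_two_atTop.neg.div_const x
  calc ∫ t in Ioi x, exp (-t ^ 2 / 2)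
      ≤ ∫ t in Ioi x, t / x * exp (-t ^ 2 / 2) :=
        setIntegral_mono_on integrable_exp_neg_sq_div_two.integrableOn
          (integrableOn_Ioi_deriv_of_nonneg' (fun t _ => hderiv t) hnonneg hlim)
          measurableSet_Ioi fun t (ht : x < t) =>
            le_mul_of_one_le_left (exp_nonneg _) ((one_le_div hx).2 ht.le)
    _ = exp (-x ^ 2 / 2) / x := by
        rw [integral_Ioi_of_hasDerivAt_of_nonneg' (fun t _ => hderiv t) hnonneg hlim]
        ring

lemma le_integral_Ioi_exp_neg_sq_div_two (x : ℝ) :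
    x / (x ^ 2 + 1) * exp (-x ^ 2 / 2) ≤ ∫ t in Ioi x, exp (-t ^ 2 / 2) := by
  have hderiv (t : ℝ) : HasDerivAt (fun t => -(t / (t ^ 2 + 1) * exp (-t ^ 2 / 2)))
      ((1 - 2 / (t ^ 2 + 1) ^ 2) * exp (-t ^ 2 / 2)) t := by
    have hne : t ^ 2 + 1 ≠ 0 := by positivity
    refine (((hasDerivAt_id' t).fun_div ((hasDerivAt_pow 2 t).add_const 1) hne).fun_mul
      (hasDerivAt_exp_neg_sq_div_two t)).fun_neg.congr_deriv ?_
    field_simp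
    push_cast
    ring
  have hcoeff (t : ℝ) : 0 ≤ 2 / (t ^ 2 + 1) ^ 2 ∧ 2 / (t ^ 2 + 1) ^ 2 ≤ 2 :=
    ⟨by positivity, div_le_self two_pos.le (one_le_pow₀ (by nlinarith [sq_nonneg t]))⟩
  have hint : Integrable fun t : ℝ => (1 - 2 / (t ^ 2 + 1) ^ 2) * exp (-t ^ 2 / 2) := by
    refine integrable_exp_neg_sq_div_two.bdd_mul (c := 1)
      (Continuous.aestronglyMeasurable ?_) (.of_forall fun t => ?_)
    · fun_prop (disch := intro; positivity)
    · rw [norm_eq_abs, abs_le]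
      constructor <;> linarith [(hcoeff t).1, (hcoeff t).2]
  have hlim : Tendsto (fun t : ℝ => -(t / (t ^ 2 + 1) * exp (-t ^ 2 / 2))) atTop (𝓝 0) := by
    refine squeeze_zero_norm (fun t => ?_) tendsto_exp_neg_sq_div_two_atTop
    rw [norm_neg, norm_mul, norm_of_nonneg (exp_nonneg _), norm_eq_abs]
    refine mul_le_of_le_one_left (exp_nonneg _) ?_
    rw [abs_div, abs_of_pos (by positivity : 0 < t ^ 2 + 1), div_le_one (by positivity), ← sq_abs]
    nlinarith [sq_nonneg (|t| - 1), sq_nonneg |t|]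
  calc x / (x ^ 2 + 1) * exp (-x ^ 2 / 2)
      = ∫ t in Ioi x, (1 - 2 / (t ^ 2 + 1) ^ 2) * exp (-t ^ 2 / 2) := by
        rw [integral_Ioi_of_hasDerivAt_of_tendsto' (fun t _ => hderiv t) hint.integrableOn hlim]
        ring
    _ ≤ ∫ t in Ioi x, exp (-t ^ 2 / 2) :=
        setIntegral_mono hint.integrableOn integrable_exp_neg_sq_div_two.integrableOn fun t =>
          mul_le_of_le_one_left (exp_nonneg _) (by linarith [(hcoeff t).1])

end GaussianIntegral

section Numerics

lemma exp_nine_halves_lt : exp (9 / 2) < 90.1 := by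
  refine lt_of_pow_lt_pow_left₀ 2 (by norm_num) ?_
  calc exp (9 / 2) ^ 2 = exp 1 ^ 9 := by
        rw [← exp_nat_mul, ← exp_nat_mul]
        norm_num
    _ < 2.7183 ^ 9 := by
        gcongr
        exact exp_one_lt_d9.trans (by norm_num)
    _ < 90.1 ^ 2 := by norm_num

lemma integral_zero_three_exp_neg_sq_div_two_le :
    ∫ t in (0 : ℝ)..3, exp (-t ^ 2 / 2) ≤ 5 / 4 := by
  have hexp : 1 / 90.1 ≤ exp (-3 ^ 2 / 2) := by
    rw [show (-3 ^ 2 / 2 : ℝ) = -(9 / 2) by norm_num, exp_neg, ← one_div]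
    exact one_div_le_one_div_of_le (exp_pos _) exp_nine_halves_lt.le
  have hpi : √(π / 2) ≤ 1.25332 := sqrt_le_iff.2 ⟨by norm_num, by linarith [pi_lt_d4]⟩
  have htail := le_integral_Ioi_exp_neg_sq_div_two 3
  rw [integral_exp_neg_sq_div_two_eq_sub]
  linarith

lemma le_integral_zero_three_exp_neg_sq_div_two :
    6 / 5 ≤ ∫ t in (0 : ℝ)..3, exp (-t ^ 2 / 2) := by
  have hexp : exp (-3 ^ 2 / 2) ≤ 1 / 10 := by
    rw [show (-3 ^ 2 / 2 : ℝ) = -(9 / 2) by norm_num, exp_neg, ← one_div]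
    refine one_div_le_one_div_of_le (by norm_num) ?_
    linarith [quadratic_le_exp_of_nonneg (x := 9 / 2) (by norm_num)]
  have hpi : 1.25 ≤ √(π / 2) := le_sqrt_of_sq_le (by linarith [pi_gt_d4])
  have htail := integral_Ioi_exp_neg_sq_div_two_le (x := 3) (by norm_num)
  rw [integral_exp_neg_sq_div_two_eq_sub]
  linarith

end Numerics

/-- Lemma: bounds on `Δ_{i,j} = (1 + 2 Σ_{1 ≤ u ≤ 3k_s} exp(−u²/(2k_s²)))²` for an interior
pixel: `(2k_s+1)² ≤ Δ ≤ (5k_s+2)²/4`. -/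
theorem Delta_bounds (ks : ℝ) (hks : 5 ≤ ks) :
    (2 * ks + 1) ^ 2 ≤
        (1 + 2 * ∑ u ∈ Finset.Icc (1 : ℤ) ⌊3 * ks⌋,
          Real.exp (-(u : ℝ) ^ 2 / (2 * ks ^ 2))) ^ 2 ∧
      (1 + 2 * ∑ u ∈ Finset.Icc (1 : ℤ) ⌊3 * ks⌋,
          Real.exp (-(u : ℝ) ^ 2 / (2 * ks ^ 2))) ^ 2 ≤ (5 * ks + 2) ^ 2 / 4 := by
  have hk : 0 < ks := by linarith
  set S := ∑ u ∈ Finset.Icc (1 : ℤ) ⌊3 * ks⌋, exp (-(u : ℝ) ^ 2 / (2 * ks ^ 2))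
  set I := ∫ t in (0 : ℝ)..3, exp (-t ^ 2 / 2)
  have hlower : ks ≤ S := calc
    ks ≤ ks * (6 / 5) - 1 := by linarith
    _ ≤ ks * I - 1 := by gcongr; exact le_integral_zero_three_exp_neg_sq_div_two
    _ ≤ S := by linarith [mul_integral_le_one_add_sum_exp_neg_sq_div hk zero_le_three]
  have hupper : S ≤ 5 / 4 * ks := calc
    S ≤ ks * I := sum_exp_neg_sq_div_le_mul_integral hk zero_le_three
    _ ≤ ks * (5 / 4) := by gcongr; exact integral_zero_three_exp_neg_sq_div_two_le
    _ = 5 / 4 * ks := mul_comm _ _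
  constructor
  · gcongr ?_ ^ 2
    linarith
  · calc (1 + 2 * S) ^ 2 ≤ (1 + 2 * (5 / 4 * ks)) ^ 2 := by gcongr
      _ = (5 * ks + 2) ^ 2 / 4 := by ring
end

section
/- Let k_s ≥ 5 be a real number. Then (1 + 2·Σ_{u∈ℤ, 1 ≤ u ≤ 3k_s} exp(−u²/k_s²))² ≤ (1 + 2·Σ_{u∈ℤ, 1 ≤ u ≤ 3k_s} exp(−u²/(2k_s²)))⁴ / (4k_s²). -/
/-!
Squaring a weight in `(0, 1]` does not increase it, so `A = 1 + 2 ∑ exp (-u² / k²)` is at most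
`B = 1 + 2 ∑ exp (-u² / (2k²))`, and `A² ≤ B⁴ / (4k²)` follows from `2k ≤ B`. For the latter, only
the terms with `u ≤ 2k` are kept, and `exp (-x) ≥ (1 - x / 3) ^ 3` for `x ≤ 3` bounds their sum
below by one with a closed form, whose comparison with `2k` is a polynomial inequality in the
integer and fractional parts of `2k`. The simpler bound `exp (-x) ≥ (1 - x / 2) ^ 2` would not give
`2k ≤ B` near `k = 0.6`.
-/

open Real

/-- The polynomial in `x` whose value at a natural number `n` is
`∑ u ∈ Finset.Icc 1 n, (1 - c * u ^ 2) ^ 3`. It is evaluated at real `x` so that the estimates on it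
are inequalities between real polynomials. -/
noncomputable def sumCubeOneSubMulSq (c x : ℝ) : ℝ :=
  x - c * (x * (x + 1) * (2 * x + 1) / 2)
    + c ^ 2 * (x * (x + 1) * (2 * x + 1) * (3 * x ^ 2 + 3 * x - 1) / 10)
    - c ^ 3 * (x * (x + 1) * (2 * x + 1) * (3 * x ^ 4 + 6 * x ^ 3 - 3 * x + 1) / 42)

lemma sum_Icc_one_sub_mul_sq_pow_three (c : ℝ) (n : ℕ) :
    ∑ u ∈ Finset.Icc 1 n, (1 - c * (u : ℝ) ^ 2) ^ 3 = sumCubeOneSubMulSq c n := by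
  induction n with
  | zero => simp [sumCubeOneSubMulSq]
  | succ n ih =>
    rw [Finset.sum_Icc_succ_top (by omega), ih]
    unfold sumCubeOneSubMulSq
    push_cast
    ring

lemma le_one_add_two_mul_sumCubeOneSubMulSq {x m : ℝ} (hx : 1 ≤ x) (hm : m ∈ Set.Icc x (x + 1)) :
    m ≤ 1 + 2 * sumCubeOneSubMulSq (2 / (3 * m ^ 2)) x := by
  obtain ⟨a, ha, rfl⟩ : ∃ a, 0 ≤ a ∧ x = 1 + a := ⟨x - 1, by linarith, by ring⟩
  obtain ⟨t, ht, rfl⟩ : ∃ t, 0 ≤ t ∧ m = 1 + a + t := ⟨m - (1 + a), by linarith [hm.1], by ring⟩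
  have : 0 ≤ 1 - t := by linarith [hm.2]
  have hpos : 0 < 27 * (1 + a + t) ^ 6 := by positivity
  rw [← sub_nonneg, ← mul_nonneg_iff_of_pos_left hpos]
  -- Clearing denominators leaves a polynomial in `a` and `t` whose negative coefficients are
  -- absorbed through `t ≤ 1`.
  calc (0 : ℝ) ≤
        (2 + 9 * t + 72 * t ^ 2 + 189 * t ^ 7
          + t ^ 3 * (1 - t) * (243 + 405 * t + 324 * t ^ 2 + 216 * t ^ 3))
        + a * (1913 / 105 + 516 / 5 * t + 2103 / 5 * t ^ 2 + 504 * t ^ 6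
          + t ^ 3 * (1 - t) * (792 + 963 * t + 639 * t ^ 2))
        + a ^ 2 * (306 / 5 + 1641 / 5 * t + 864 * t ^ 2 + 441 * t ^ 5
          + t ^ 3 * (1 - t) * (846 + 684 * t))
        + a ^ 3 * (1639 / 15 + 480 * t + 798 * t ^ 2 + 117 * t ^ 4 + 288 * t ^ 3 * (1 - t))
        + a ^ 4 * (114 + 363 * t + 315 * t ^ 2 + 9 * t ^ 2 * (1 - t))
        + a ^ 5 * (347 / 5 + 684 / 5 * t + 207 / 5 * t ^ 2)
        + a ^ 6 * (114 / 5 + 99 / 5 * t)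
        + 109 / 35 * a ^ 7 := by positivity
    _ = _ := by
      unfold sumCubeOneSubMulSq
      field_simp
      ring

lemma le_one_add_two_mul_sum_one_sub_sq_pow_three (m : ℝ) :
    m ≤ 1 + 2 * ∑ u ∈ Finset.Icc 1 ⌊m⌋₊, (1 - 2 / (3 * m ^ 2) * (u : ℝ) ^ 2) ^ 3 := by
  obtain hm | hm := lt_or_ge m 1
  · simp [Nat.floor_eq_zero.mpr hm, hm.le]
  · rw [sum_Icc_one_sub_mul_sq_pow_three]
    exact le_one_add_two_mul_sumCubeOneSubMulSq (by exact_mod_cast Nat.floor_pos.mpr hm)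
      ⟨Nat.floor_le (by linarith), (Nat.lt_floor_add_one m).le⟩

lemma one_sub_sq_div_pow_three_le_exp {k x : ℝ} (hx : x ^ 2 ≤ 6 * k ^ 2) :
    (1 - x ^ 2 / (6 * k ^ 2)) ^ 3 ≤ exp (-x ^ 2 / (2 * k ^ 2)) := by
  have hexponent : x ^ 2 / (2 * k ^ 2) ≤ (3 : ℕ) :=
    div_le_of_le_mul₀ (by positivity) (by positivity) (by push_cast; linarith)
  calc (1 - x ^ 2 / (6 * k ^ 2)) ^ 3 = (1 - x ^ 2 / (2 * k ^ 2) / (3 : ℕ)) ^ 3 := by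
        push_cast
        ring
    _ ≤ exp (-(x ^ 2 / (2 * k ^ 2))) := one_sub_div_pow_le_exp_neg hexponent
    _ = exp (-x ^ 2 / (2 * k ^ 2)) := by rw [neg_div]

lemma two_mul_le_one_add_two_mul_sum_exp {k w : ℝ} (hw : 2 * k ≤ w) :
    2 * k ≤ 1 + 2 * ∑ u ∈ Finset.Icc (1 : ℤ) ⌊w⌋, exp (-(u : ℝ) ^ 2 / (2 * k ^ 2)) := by
  have hle : ∀ u ∈ Finset.Icc 1 ⌊2 * k⌋₊, (u : ℝ) ≤ 2 * k := by
    intro u hu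
    obtain ⟨hu_pos, hu_le⟩ := Finset.mem_Icc.mp hu
    exact (Nat.le_floor_iff' (by omega)).mp hu_le
  have hsubset : (Finset.Icc 1 ⌊2 * k⌋₊).image (Nat.cast : ℕ → ℤ) ⊆ Finset.Icc 1 ⌊w⌋ :=
    Finset.image_subset_iff.mpr fun u hu => Finset.mem_Icc.mpr
      ⟨by exact_mod_cast (Finset.mem_Icc.mp hu).1,
        Int.le_floor.mpr (by exact_mod_cast (hle u hu).trans hw)⟩
  refine (le_one_add_two_mul_sum_one_sub_sq_pow_three (2 * k)).trans ?_
  gcongr 1 + 2 * ?_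
  calc ∑ u ∈ Finset.Icc 1 ⌊2 * k⌋₊, (1 - 2 / (3 * (2 * k) ^ 2) * (u : ℝ) ^ 2) ^ 3
      = ∑ u ∈ Finset.Icc 1 ⌊2 * k⌋₊, (1 - (u : ℝ) ^ 2 / (6 * k ^ 2)) ^ 3 :=
        Finset.sum_congr rfl fun u _ => by ring
    _ ≤ ∑ u ∈ Finset.Icc 1 ⌊2 * k⌋₊, exp (-(u : ℝ) ^ 2 / (2 * k ^ 2)) :=
        Finset.sum_le_sum fun u hu =>
          one_sub_sq_div_pow_three_le_exp (by nlinarith [hle u hu, u.cast_nonneg (α := ℝ)])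
    _ = ∑ u ∈ (Finset.Icc 1 ⌊2 * k⌋₊).image (Nat.cast : ℕ → ℤ),
          exp (-(u : ℝ) ^ 2 / (2 * k ^ 2)) := by
        simp [Finset.sum_image Nat.cast_injective.injOn]
    _ ≤ ∑ u ∈ Finset.Icc (1 : ℤ) ⌊w⌋, exp (-(u : ℝ) ^ 2 / (2 * k ^ 2)) :=
        Finset.sum_le_sum_of_subset_of_nonneg hsubset fun _ _ _ => (exp_pos _).le

theorem sum_of_squares_negligible_general {ks w : ℝ} (hks : 0 < ks) (hw : 2 * ks ≤ w) :
    (1 + 2 * ∑ u ∈ Finset.Icc (1 : ℤ) ⌊w⌋, exp (-(u : ℝ) ^ 2 / ks ^ 2)) ^ 2 ≤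
      (1 + 2 * ∑ u ∈ Finset.Icc (1 : ℤ) ⌊w⌋, exp (-(u : ℝ) ^ 2 / (2 * ks ^ 2))) ^ 4 /
        (4 * ks ^ 2) := by
  set A := 1 + 2 * ∑ u ∈ Finset.Icc (1 : ℤ) ⌊w⌋, exp (-(u : ℝ) ^ 2 / ks ^ 2)
  set B := 1 + 2 * ∑ u ∈ Finset.Icc (1 : ℤ) ⌊w⌋, exp (-(u : ℝ) ^ 2 / (2 * ks ^ 2))
  have hA_nonneg : 0 ≤ A := by positivity
  have hA_le_B : A ≤ B := by
    simp only [A, B, neg_div]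
    gcongr
    linarith [sq_nonneg ks]
  have hks_le_B : 2 * ks ≤ B := two_mul_le_one_add_two_mul_sum_exp hw
  rw [le_div_iff₀ (by positivity)]
  calc A ^ 2 * (4 * ks ^ 2) = A ^ 2 * (2 * ks) ^ 2 := by ring
    _ ≤ B ^ 2 * B ^ 2 := by gcongr
    _ = B ^ 4 := by ring

/-- Lemma: the sum of squared kernel weights is negligible compared with the squared total
weight: `Σ δ² ≤ Δ²/(4k_s²)` for an interior pixel. -/
theorem sum_of_squares_negligible (ks : ℝ) (hks : 5 ≤ ks) :
    (1 + 2 * ∑ u ∈ Finset.Icc (1 : ℤ) ⌊3 * ks⌋,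
        Real.exp (-(u : ℝ) ^ 2 / ks ^ 2)) ^ 2 ≤
      (1 + 2 * ∑ u ∈ Finset.Icc (1 : ℤ) ⌊3 * ks⌋,
        Real.exp (-(u : ℝ) ^ 2 / (2 * ks ^ 2))) ^ 4 / (4 * ks ^ 2) :=
  sum_of_squares_negligible_general (by linarith) (by linarith)
end

section
/- Define ψ₁(t) = (1+4t)^{−3/2} − (1+2t)^{−3} for t ≥ 0. Then ψ₁(t) ≥ 0 for all t ≥ 0, and for all t ∈ [0, 1/25] one has 4t² ≤ ψ₁(t) ≤ 6t². -/
/-!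
For every real `d ≥ 0`, the difference `(1 + 4t)^(-d/2) - (1 + 2t)^(-d)` is
`f (1 + 4t) - f ((1 + 2t)²)` for the convex function `f x = x^(-d/2)`, and the two arguments differ
by exactly `4t²`. Comparing `f` with its tangents at the two points squeezes the difference between
`2d t² / (1 + 2t)^(d + 2)` and `2d t² / (1 + 4t)^(d/2 + 1)`. For `d = 3` the upper bound is at most
`6t²` when `t ≥ 0`, and the lower one is at least `4t²` when `0 ≤ t ≤ 1/25` because
`6 / (27/25)^5 > 4`.
-/

open Real

lemma one_add_mul_one_sub_inv_le_rpow {p q : ℝ} (hp : 0 ≤ p) (hq : 0 < q) :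
    1 + p * (1 - q⁻¹) ≤ q ^ p :=
  calc 1 + p * (1 - q⁻¹) ≤ p * log q + 1 := by
        linarith [mul_le_mul_of_nonneg_left (one_sub_inv_le_log_of_pos hq) hp]
    _ ≤ exp (p * log q) := add_one_le_exp _
    _ = q ^ p := by rw [rpow_def_of_pos hq, mul_comm]

lemma mul_sub_div_rpow_le_rpow_neg_sub_rpow_neg {p x y : ℝ} (hp : 0 ≤ p) (hx : 0 < x)
    (hy : 0 < y) : p * (y - x) / y ^ (p + 1) ≤ x ^ (-p) - y ^ (-p) := by
  have bernoulli : p * (1 - x / y) ≤ (y / x) ^ p - 1 := by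
    have h := one_add_mul_one_sub_inv_le_rpow hp (div_pos hy hx)
    rw [inv_div] at h
    linarith
  calc p * (y - x) / y ^ (p + 1) = p * (1 - x / y) / y ^ p := by
        rw [rpow_add_one hy.ne']
        field_simp
    _ ≤ ((y / x) ^ p - 1) / y ^ p := by gcongr
    _ = x ^ (-p) - y ^ (-p) := by
        rw [div_rpow hy.le hx.le, rpow_neg hx.le, rpow_neg hy.le]
        field_simp

lemma rpow_neg_sub_rpow_neg_le_mul_sub_div_rpow {p x y : ℝ} (hp : 0 ≤ p) (hx : 0 < x)
    (hy : 0 < y) : x ^ (-p) - y ^ (-p) ≤ p * (y - x) / x ^ (p + 1) := by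
  have h := mul_sub_div_rpow_le_rpow_neg_sub_rpow_neg hp hy hx
  rw [← neg_sub y x, mul_neg, neg_div] at h
  linarith

/-- The variance `ψ` of the Gaussian kernel factor `exp (-‖ξ - ξ'‖² / (2k²))` for independent
centred Gaussian vectors `ξ, ξ'` in dimension `d` with covariance `σ² Id`, as a function of
`t = σ² / k²`. The formula makes sense for every real `d`; `ψ₁` is the case `d = 3`. -/
noncomputable def gaussianKernelVariance (d t : ℝ) : ℝ :=
  (1 + 4 * t) ^ (-d / 2) - 1 / (1 + 2 * t) ^ d

lemma gaussianKernelVariance_three (t : ℝ) :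
    gaussianKernelVariance 3 t = (1 + 4 * t) ^ (-(3 : ℝ) / 2) - 1 / (1 + 2 * t) ^ 3 := by
  rw [gaussianKernelVariance, rpow_ofNat]

lemma gaussianKernelVariance_eq_rpow_sub_rpow (d : ℝ) {t : ℝ} (ht : 0 ≤ 1 + 2 * t) :
    gaussianKernelVariance d t = (1 + 4 * t) ^ (-(d / 2)) - ((1 + 2 * t) ^ 2) ^ (-(d / 2)) := by
  have hsq : ((1 + 2 * t) ^ 2) ^ (-(d / 2)) = 1 / (1 + 2 * t) ^ d := by
    rw [← rpow_natCast_mul ht, one_div, ← rpow_neg ht]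
    congr 1
    push_cast
    ring
  rw [gaussianKernelVariance, hsq, neg_div]

lemma le_gaussianKernelVariance {d t : ℝ} (hd : 0 ≤ d) (ht : -(1 / 4) < t) :
    2 * d / (1 + 2 * t) ^ (d + 2) * t ^ 2 ≤ gaussianKernelVariance d t := by
  have ha : 0 < 1 + 4 * t := by linarith
  have hb : 0 < 1 + 2 * t := by linarith
  have hpow : ((1 + 2 * t) ^ 2) ^ (d / 2 + 1) = (1 + 2 * t) ^ (d + 2) := by
    rw [← rpow_natCast_mul hb.le]
    congr 1
    push_cast
    ring
  calc 2 * d / (1 + 2 * t) ^ (d + 2) * t ^ 2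
      = d / 2 * ((1 + 2 * t) ^ 2 - (1 + 4 * t)) / ((1 + 2 * t) ^ 2) ^ (d / 2 + 1) := by
        rw [hpow]
        ring
    _ ≤ (1 + 4 * t) ^ (-(d / 2)) - ((1 + 2 * t) ^ 2) ^ (-(d / 2)) :=
        mul_sub_div_rpow_le_rpow_neg_sub_rpow_neg (by positivity) ha (by positivity)
    _ = gaussianKernelVariance d t := (gaussianKernelVariance_eq_rpow_sub_rpow d hb.le).symm

lemma gaussianKernelVariance_le {d t : ℝ} (hd : 0 ≤ d) (ht : -(1 / 4) < t) :
    gaussianKernelVariance d t ≤ 2 * d / (1 + 4 * t) ^ (d / 2 + 1) * t ^ 2 := by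
  have ha : 0 < 1 + 4 * t := by linarith
  have hb : 0 < 1 + 2 * t := by linarith
  calc gaussianKernelVariance d t
      = (1 + 4 * t) ^ (-(d / 2)) - ((1 + 2 * t) ^ 2) ^ (-(d / 2)) :=
        gaussianKernelVariance_eq_rpow_sub_rpow d hb.le
    _ ≤ d / 2 * ((1 + 2 * t) ^ 2 - (1 + 4 * t)) / (1 + 4 * t) ^ (d / 2 + 1) :=
        rpow_neg_sub_rpow_neg_le_mul_sub_div_rpow (by positivity) ha (by positivity)
    _ = 2 * d / (1 + 4 * t) ^ (d / 2 + 1) * t ^ 2 := by ring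

theorem psi1_bounds_general {d l r t : ℝ} (hd : 0 ≤ d) (hl : -(1 / 4) < l) (hlt : l ≤ t)
    (htr : t ≤ r) :
    0 ≤ gaussianKernelVariance d t ∧
      2 * d / (1 + 2 * r) ^ (d + 2) * t ^ 2 ≤ gaussianKernelVariance d t ∧
        gaussianKernelVariance d t ≤ 2 * d / (1 + 4 * l) ^ (d / 2 + 1) * t ^ 2 := by
  have ht : -(1 / 4) < t := hl.trans_le hlt
  have hl' : 0 < 1 + 4 * l := by linarith
  have ht' : 0 < 1 + 2 * t := by linarith
  have lower := le_gaussianKernelVariance hd ht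
  refine ⟨le_trans (by positivity) lower, le_trans (by gcongr) lower, ?_⟩
  exact (gaussianKernelVariance_le hd ht).trans (by gcongr)

/-- Lemma: with `ψ₁(t) = (1+4t)^{−3/2} − (1+2t)^{−3}`, one has `ψ₁(t) ≥ 0` for all `t ≥ 0`,
and `4t² ≤ ψ₁(t) ≤ 6t²` on `[0, 1/25]`. -/
theorem psi1_bounds :
    (∀ t : ℝ, 0 ≤ t → 0 ≤ (1 + 4 * t) ^ (-(3 : ℝ) / 2) - 1 / (1 + 2 * t) ^ 3) ∧
    (∀ t : ℝ, 0 ≤ t → t ≤ 1 / 25 →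
      4 * t ^ 2 ≤ (1 + 4 * t) ^ (-(3 : ℝ) / 2) - 1 / (1 + 2 * t) ^ 3 ∧
        (1 + 4 * t) ^ (-(3 : ℝ) / 2) - 1 / (1 + 2 * t) ^ 3 ≤ 6 * t ^ 2) := by
  simp only [← gaussianKernelVariance_three]
  have bounds {t r : ℝ} (ht : 0 ≤ t) (htr : t ≤ r) :=
    psi1_bounds_general (d := 3) (by norm_num) (by norm_num) ht htr
  refine ⟨fun t ht => (bounds ht le_rfl).1, fun t ht htr => ?_⟩
  obtain ⟨-, lower, upper⟩ := bounds ht htr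
  norm_num at lower upper
  exact ⟨by linarith [sq_nonneg t], upper⟩
end

section
/- Define ψ₂(t) = (1+t)^{−3/2}(1+3t)^{−3/2} − (1+2t)^{−3} for t ≥ 0. Then ψ₂(t) ≥ 0 for all t ≥ 0, and for all t ∈ [0, 1/25] one has t² ≤ ψ₂(t) ≤ (3/2)t². -/
/-!
Since `(1 + t)(1 + 3t) = (1 + 2t)² - t²`, `ψ₂(t)` is the increment of `x ↦ x^(-3/2)` between
`(1 + 2t)²` and `(1 + 2t)² - t²`. This function is convex, so the increment lies between the ones
predicted by the tangents at the two end points: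
`(3/2) t² (1 + 2t)⁻⁵ ≤ ψ₂(t) ≤ (3/2) t² ((1 + t)(1 + 3t))^(-5/2)`.
For `t ≤ 1/25` one has `(1 + 2t)⁵ ≤ (27/25)⁵ ≤ 3/2`, and for `t ≥ 0` the last power is at most `1`.
-/

open Real

lemma one_add_mul_sub_one_le_rpow_of_nonpos {x p : ℝ} (hx : 0 < x) (hp : p ≤ 0) :
    1 + p * (x - 1) ≤ x ^ p :=
  calc 1 + p * (x - 1) ≤ 1 + p * log x := by
        gcongr 1 + ?_
        exact mul_le_mul_of_nonpos_left (log_le_sub_one_of_pos hx) hp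
    _ ≤ exp (log x * p) := by linarith [add_one_le_exp (log x * p)]
    _ = x ^ p := (rpow_def_of_pos hx p).symm

lemma rpow_add_mul_rpow_sub_one_mul_sub_le_rpow_of_nonpos {x y p : ℝ} (hx : 0 < x) (hy : 0 < y)
    (hp : p ≤ 0) : x ^ p + p * x ^ (p - 1) * (y - x) ≤ y ^ p :=
  calc x ^ p + p * x ^ (p - 1) * (y - x) = x ^ p * (1 + p * (y / x - 1)) := by
        rw [rpow_sub_one hx.ne']
        field_simp
    _ ≤ x ^ p * (y / x) ^ p := by
        gcongr
        exact one_add_mul_sub_one_le_rpow_of_nonpos (div_pos hy hx) hp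
    _ = y ^ p := by rw [← mul_rpow hx.le (div_pos hy hx).le, mul_div_cancel₀ y hx.ne']

lemma sq_rpow_neg_natCast_div_two {x : ℝ} (hx : 0 ≤ x) (n : ℕ) :
    (x ^ 2) ^ (-(n : ℝ) / 2) = 1 / x ^ n := by
  rw [← rpow_natCast_mul hx, Nat.cast_ofNat, mul_div_cancel₀ _ two_ne_zero, rpow_neg hx,
    rpow_natCast, one_div]

/-- The function `ψ₂`: the covariance of two Gaussian kernel factors sharing one argument, in terms
of the ratio `t = σ²/k_s²`. It is meaningful for `t > -1/3`: otherwise a real power has a nonpositive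
base. -/
noncomputable def psi2 (t : ℝ) : ℝ :=
  (1 + t) ^ (-(3 : ℝ) / 2) * (1 + 3 * t) ^ (-(3 : ℝ) / 2) - 1 / (1 + 2 * t) ^ 3

section

variable {t : ℝ}

lemma psi2_eq_rpow_sub_rpow (ht : -1 / 3 < t) :
    psi2 t = ((1 + t) * (1 + 3 * t)) ^ (-(3 : ℝ) / 2) - ((1 + 2 * t) ^ 2) ^ (-(3 : ℝ) / 2) := by
  have h_sq : ((1 + 2 * t) ^ 2) ^ (-(3 : ℝ) / 2) = 1 / (1 + 2 * t) ^ 3 :=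
    sq_rpow_neg_natCast_div_two (by linarith) 3
  rw [psi2, mul_rpow (by linarith) (by linarith), h_sq]

lemma three_halves_mul_sq_div_le_psi2 (ht : -1 / 3 < t) :
    3 / 2 * t ^ 2 / (1 + 2 * t) ^ 5 ≤ psi2 t := by
  have hp : 0 < (1 + t) * (1 + 3 * t) := mul_pos (by linarith) (by linarith)
  have hu : 0 < 1 + 2 * t := by linarith
  have h_tangent := rpow_add_mul_rpow_sub_one_mul_sub_le_rpow_of_nonpos (pow_pos hu 2) hp
    (by norm_num : -(3 : ℝ) / 2 ≤ 0)
  have h_pow : ((1 + 2 * t) ^ 2) ^ (-(3 : ℝ) / 2 - 1) = 1 / (1 + 2 * t) ^ 5 := by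
    rw [← sq_rpow_neg_natCast_div_two hu.le]
    norm_num
  rw [h_pow] at h_tangent
  rw [psi2_eq_rpow_sub_rpow ht, le_sub_iff_add_le']
  convert h_tangent using 2
  ring

lemma psi2_le_three_halves_mul_sq_mul_rpow (ht : -1 / 3 < t) :
    psi2 t ≤ 3 / 2 * t ^ 2 * ((1 + t) * (1 + 3 * t)) ^ (-(5 : ℝ) / 2) := by
  have hp : 0 < (1 + t) * (1 + 3 * t) := mul_pos (by linarith) (by linarith)
  have hu : 0 < 1 + 2 * t := by linarith
  have h_tangent := rpow_add_mul_rpow_sub_one_mul_sub_le_rpow_of_nonpos hp (pow_pos hu 2)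
    (by norm_num : -(3 : ℝ) / 2 ≤ 0)
  rw [show -(3 : ℝ) / 2 - 1 = -5 / 2 by norm_num] at h_tangent
  rw [psi2_eq_rpow_sub_rpow ht]
  linear_combination h_tangent

lemma psi2_nonneg (ht : -1 / 3 < t) : 0 ≤ psi2 t := by
  have hu : 0 < 1 + 2 * t := by linarith
  exact le_trans (by positivity) (three_halves_mul_sq_div_le_psi2 ht)

lemma sq_le_psi2 (ht : -1 / 3 < t) (ht' : t ≤ 1 / 25) : t ^ 2 ≤ psi2 t := by
  have hu : 0 < 1 + 2 * t := by linarith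
  have hu5 : (1 + 2 * t) ^ 5 ≤ 3 / 2 :=
    calc (1 + 2 * t) ^ 5 ≤ (27 / 25) ^ 5 := by gcongr; linarith
      _ ≤ 3 / 2 := by norm_num
  calc t ^ 2 ≤ 3 / 2 * t ^ 2 / (1 + 2 * t) ^ 5 := by
        rw [le_div_iff₀ (pow_pos hu 5), mul_comm]
        gcongr
    _ ≤ psi2 t := three_halves_mul_sq_div_le_psi2 ht

lemma psi2_le_three_halves_mul_sq (ht : 0 ≤ t) : psi2 t ≤ 3 / 2 * t ^ 2 := by
  have hp : 1 ≤ (1 + t) * (1 + 3 * t) := one_le_mul_of_one_le_of_one_le (by linarith) (by linarith)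
  calc psi2 t ≤ 3 / 2 * t ^ 2 * ((1 + t) * (1 + 3 * t)) ^ (-(5 : ℝ) / 2) :=
        psi2_le_three_halves_mul_sq_mul_rpow (by linarith)
    _ ≤ 3 / 2 * t ^ 2 :=
        mul_le_of_le_one_right (by positivity)
          (rpow_le_one_of_one_le_of_nonpos hp (by norm_num))

end

theorem psi2_bounds_general :
    (∀ t : ℝ, -1 / 3 < t → 0 ≤ psi2 t) ∧
    (∀ t : ℝ, -1 / 3 < t → t ≤ 1 / 25 → t ^ 2 ≤ psi2 t) ∧
    (∀ t : ℝ, 0 ≤ t → psi2 t ≤ 3 / 2 * t ^ 2) :=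
  ⟨fun _ ↦ psi2_nonneg, fun _ ↦ sq_le_psi2, fun _ ↦ psi2_le_three_halves_mul_sq⟩

/-- Lemma: with `ψ₂(t) = (1+t)^{−3/2}(1+3t)^{−3/2} − (1+2t)^{−3}`, one has `ψ₂(t) ≥ 0` for
all `t ≥ 0`, and `t² ≤ ψ₂(t) ≤ (3/2)t²` on `[0, 1/25]`. -/
theorem psi2_bounds :
    (∀ t : ℝ, 0 ≤ t →
      0 ≤ (1 + t) ^ (-(3 : ℝ) / 2) * (1 + 3 * t) ^ (-(3 : ℝ) / 2) - 1 / (1 + 2 * t) ^ 3) ∧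
    (∀ t : ℝ, 0 ≤ t → t ≤ 1 / 25 →
      t ^ 2 ≤ (1 + t) ^ (-(3 : ℝ) / 2) * (1 + 3 * t) ^ (-(3 : ℝ) / 2) - 1 / (1 + 2 * t) ^ 3 ∧
        (1 + t) ^ (-(3 : ℝ) / 2) * (1 + 3 * t) ^ (-(3 : ℝ) / 2) - 1 / (1 + 2 * t) ^ 3 ≤
          3 / 2 * t ^ 2) := by
  obtain ⟨h_nonneg, h_lower, h_upper⟩ := psi2_bounds_general
  exact ⟨fun t ht ↦ h_nonneg t (by linarith),
    fun t ht ht' ↦ ⟨h_lower t (by linarith) ht', h_upper t ht⟩⟩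
end
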